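/- arXiv:2604.21114 — 3 statements merged into one kernel-verified Lean document; each statement's English description precedes it below -/
import Mathlib

section
/- Let E and F be real Banach spaces, let L : E → F and P : F → E be continuous linear maps such that L (P f) = f for all f ∈ F (P is a bounded right inverse of L). Let θ ∈ F, let ε > 0 and C ≥ 0, and let Q : E → F be a map with Q 0 = 0 satisfying the quadratic Lipschitz estimate ‖Q ν₁ − Q ν₂‖ ≤ C (‖ν₁‖ + ‖ν₂‖) ‖ν₁ − ν₂‖ for all ν₁, ν₂ ∈ E with ‖ν₁‖ ≤ ε and ‖ν₂‖ ≤ ε. Assume ‖P‖ ‖θ‖ ≤ ε/4 and 2 C ‖P‖ ε ≤ 1/2. Then there exists ν ∈ E with ‖ν‖ ≤ ε such that θ + L ν + Q ν = 0. -/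
/-!
A solution of `θ + L ν + Q ν = 0` is a coincidence point of `L` and `G ν = -(θ + Q ν)`. If `P` is a
right inverse of `L`, then a fixed point `ν = P (G ν)` is such a point, since `L ν = L (P (G ν))`.
The quadratic estimate makes the Lipschitz constant of `Q` on the ball of radius `ε` of order `ε`,
so for small `ε` the map `P ∘ G` contracts that ball and, for small `θ`, keeps it invariant.
-/

open Function Metric
open scoped NNReal

section Coincidence

variable {X Y : Type*} [MetricSpace X] [CompleteSpace X] {x₀ : X} {r : ℝ}

theorem exists_isFixedPt_mem_closedBall_of_lipschitzOnWith {f : X → X} {K : ℝ≥0}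
    (hf : LipschitzOnWith K f (closedBall x₀ r)) (hK : K < 1)
    (hx₀ : dist (f x₀) x₀ ≤ (1 - K) * r) :
    ∃ x ∈ closedBall x₀ r, IsFixedPt f x := by
  have hK' : (0 : ℝ) < 1 - K := sub_pos.2 (by exact_mod_cast hK)
  have hr : 0 ≤ r := nonneg_of_mul_nonneg_right (dist_nonneg.trans hx₀) hK'
  have hmem : x₀ ∈ closedBall x₀ r := mem_closedBall_self hr
  have hmaps : Set.MapsTo f (closedBall x₀ r) (closedBall x₀ r) := fun x hx ↦
    calc dist (f x) x₀
      _ ≤ dist (f x) (f x₀) + dist (f x₀) x₀ := dist_triangle _ _ _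
      _ ≤ K * dist x x₀ + (1 - K) * r := add_le_add (hf.dist_le_mul x hx x₀ hmem) hx₀
      _ ≤ K * r + (1 - K) * r := by gcongr; exact hx
      _ = r := by ring
  have hcontr : ContractingWith K (hmaps.restrict f _ _) := ⟨hK, hf.mapsToRestrict hmaps⟩
  obtain ⟨x, hx, hfix, -⟩ :=
    hcontr.exists_fixedPoint' isClosed_closedBall.isComplete hmaps hmem (edist_ne_top _ _)
  exact ⟨x, hx, hfix⟩

theorem exists_mem_closedBall_apply_eq_of_rightInverse [PseudoMetricSpace Y]
    {L G : X → Y} {P : Y → X} {K c : ℝ≥0} (hLP : RightInverse P L) (hP : LipschitzWith K P)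
    (hG : LipschitzOnWith c G (closedBall x₀ r)) (hKc : K * c < 1)
    (hx₀ : dist (P (G x₀)) x₀ ≤ (1 - K * c) * r) :
    ∃ x ∈ closedBall x₀ r, L x = G x := by
  obtain ⟨x, hx, hfix⟩ := exists_isFixedPt_mem_closedBall_of_lipschitzOnWith
    (hP.comp_lipschitzOnWith hG) hKc (by exact_mod_cast hx₀)
  refine ⟨x, hx, ?_⟩
  calc L x = L (P (G x)) := congrArg L hfix.eq.symm
    _ = G x := hLP (G x)

end Coincidence

theorem lipschitzOnWith_closedBall_of_quadratic_estimate {E F : Type*}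
    [SeminormedAddCommGroup E] [SeminormedAddCommGroup F] {Q : E → F} {C r : ℝ≥0}
    (hQ : ∀ x y : E, ‖x‖ ≤ r → ‖y‖ ≤ r → ‖Q x - Q y‖ ≤ C * (‖x‖ + ‖y‖) * ‖x - y‖) :
    LipschitzOnWith (2 * C * r) Q (closedBall 0 r) := by
  refine lipschitzOnWith_iff_norm_sub_le.2 fun x hx y hy ↦ ?_
  rw [mem_closedBall_zero_iff] at hx hy
  calc ‖Q x - Q y‖
    _ ≤ C * (‖x‖ + ‖y‖) * ‖x - y‖ := hQ x y hx hy
    _ ≤ C * (r + r) * ‖x - y‖ := by gcongr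
    _ = (2 * C * r : ℝ≥0) * ‖x - y‖ := by push_cast; ring

theorem stmt_0_general {E F : Type*} [NormedAddCommGroup E] [CompleteSpace E]
    [SeminormedAddCommGroup F] {L : E → F} {P : F → E} {K : ℝ≥0}
    (hLP : RightInverse P L) (hP : LipschitzWith K P) (hP0 : P 0 = 0)
    {θ : F} {ε C : ℝ≥0} {Q : E → F} (hQ0 : Q 0 = 0)
    (hQ : ∀ ν₁ ν₂ : E, ‖ν₁‖ ≤ ε → ‖ν₂‖ ≤ ε →
      ‖Q ν₁ - Q ν₂‖ ≤ C * (‖ν₁‖ + ‖ν₂‖) * ‖ν₁ - ν₂‖)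
    (hθ : K * ‖θ‖ ≤ (1 - 2 * C * K * ε) * ε) (hsmall : (2 * C * K * ε : ℝ) < 1) :
    ∃ ν : E, ‖ν‖ ≤ ε ∧ θ + L ν + Q ν = 0 := by
  have hG : LipschitzOnWith (2 * C * ε) (fun ν ↦ -(θ + Q ν)) (closedBall 0 ε) := by
    rw [← zero_add (2 * C * ε)]
    exact ((LipschitzWith.const θ).lipschitzOnWith.add
      (lipschitzOnWith_closedBall_of_quadratic_estimate hQ)).neg
  have hstart : dist (P (-(θ + Q 0))) 0 ≤ (1 - K * (2 * C * ε : ℝ≥0)) * ε :=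
    calc dist (P (-(θ + Q 0))) 0
      _ = ‖P (-θ)‖ := by rw [hQ0, add_zero, dist_zero_right]
      _ ≤ K * ‖θ‖ := by simpa only [norm_neg] using hP.norm_le_mul hP0 (-θ)
      _ ≤ (1 - 2 * C * K * ε) * ε := hθ
      _ = (1 - K * (2 * C * ε : ℝ≥0)) * ε := by push_cast; ring
  have hKc : K * (2 * C * ε) < 1 := by
    rw [show K * (2 * C * ε) = 2 * C * K * ε by ring]
    exact_mod_cast hsmall
  obtain ⟨ν, hν, hLν⟩ := exists_mem_closedBall_apply_eq_of_rightInverse hLP hP hG hKc hstart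
  refine ⟨ν, mem_closedBall_zero_iff.1 hν, ?_⟩
  rw [hLν]
  abel

/-- The analytic core of the perturbation argument: given a bounded right inverse `P` of `L`,
a small datum `θ`, and a nonlinearity `Q` with a quadratic Lipschitz estimate, there is a
solution `ν` of `θ + L ν + Q ν = 0` in the ball of radius `ε`. -/
theorem stmt_0 {E F : Type*} [NormedAddCommGroup E] [NormedSpace ℝ E] [CompleteSpace E]
    [NormedAddCommGroup F] [NormedSpace ℝ F]
    (L : E →L[ℝ] F) (P : F →L[ℝ] E) (hLP : ∀ f : F, L (P f) = f)
    (θ : F) (ε C : ℝ) (hε : 0 < ε) (hC : 0 ≤ C)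
    (Q : E → F) (hQ0 : Q 0 = 0)
    (hQ : ∀ ν₁ ν₂ : E, ‖ν₁‖ ≤ ε → ‖ν₂‖ ≤ ε →
      ‖Q ν₁ - Q ν₂‖ ≤ C * (‖ν₁‖ + ‖ν₂‖) * ‖ν₁ - ν₂‖)
    (hθ : ‖P‖ * ‖θ‖ ≤ ε / 4)
    (hsmall : 2 * C * ‖P‖ * ε ≤ 1 / 2) :
    ∃ ν : E, ‖ν‖ ≤ ε ∧ θ + L ν + Q ν = 0 := by
  lift ε to ℝ≥0 using hε.le
  lift C to ℝ≥0 using hC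
  exact stmt_0_general hLP P.lipschitz (map_zero P) hQ0 hQ (by rw [coe_nnnorm]; nlinarith)
    (hsmall.trans_lt one_half_lt_one)
end

section
/- Let n ≥ 1 and a ≥ 1 be natural numbers, let u, β ∈ ℝ, let M be an n × n real matrix with det M ≠ 0, and let p, b ∈ ℝⁿ. Consider the (n+1) × (n+1) complex matrix N defined in block form by: N_{i k} = u^a M_{i k} for 1 ≤ i, k ≤ n; N_{i, n+1} = a u^{a−1} p_i for 1 ≤ i ≤ n; N_{n+1, k} = −2a u^{2a−1} b_k · i for 1 ≤ k ≤ n; and N_{n+1, n+1} = 1 − 2a(2a−1) u^{2a−2} β · i (real entries regarded as complex numbers, i the imaginary unit). Then det N = u^{n a} · det M · ( 1 + u^{2a−2} · ( 2a² (bᵀ M⁻¹ p) − 2a(2a−1) β ) · i ), where bᵀ M⁻¹ p denotes the real scalar Σ_{k,l} b_k (M⁻¹)_{k l} p_l regarded as a complex number. -/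
open Matrix

/-!
Every entry of the first `n` columns is divisible by `u ^ a`, the bottom row because
`2a - 1 = a + (a - 1)`. Pulling this factor out leaves the invertible block `M` bordered by one row
and one column, whose determinant is given by the Schur complement; there the remaining powers
`u ^ (a - 1)` of the column and the row multiply to `u ^ (2a - 2)`. As `u ^ a` is factored out
before anything is inverted, `u = 0` needs no separate treatment.
-/

section BlockDeterminants

variable {m n R S : Type*} [Fintype m] [DecidableEq m] [Fintype n] [DecidableEq n]
  [CommRing R] [CommRing S]

theorem det_fromBlocks_smul_left (c : R) (A : Matrix m m R) (B : Matrix m n R)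
    (C : Matrix n m R) (D : Matrix n n R) :
    (fromBlocks (c • A) B (c • C) D).det = c ^ Fintype.card m * (fromBlocks A B C D).det := by
  have factor : fromBlocks (c • A) B (c • C) D =
      fromBlocks A B C D * fromBlocks (c • (1 : Matrix m m R)) 0 0 1 := by
    simp [fromBlocks_multiply]
  rw [factor, det_mul, det_fromBlocks_zero₂₁, det_smul, det_one, det_one, mul_one, mul_one,
    mul_comm]

theorem det_fromBlocks_replicateCol_replicateRow [Unique n] {A : Matrix m m R}
    (hA : IsUnit A.det) (p b : m → R) (D : Matrix n n R) :
    (fromBlocks A (replicateCol n p) (replicateRow n b) D).det =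
      A.det * (D default default - b ⬝ᵥ A⁻¹ *ᵥ p) := by
  have := A.invertibleOfIsUnitDet hA
  rw [det_fromBlocks₁₁, invOf_eq_nonsing_inv, det_unique (n := n), Matrix.sub_apply,
    Matrix.mul_assoc, ← replicateCol_mulVec, replicateRow_mul_replicateCol_apply]

theorem det_fromBlocks_smul_replicateCol_replicateRow [Unique n] {A : Matrix m m R}
    (hA : IsUnit A.det) (c s t : R) (p b : m → R) (D : Matrix n n R) :
    (fromBlocks (c • A) (replicateCol n (s • p)) (c • replicateRow n (t • b)) D).det =
      c ^ Fintype.card m * A.det * (D default default - s * t * (b ⬝ᵥ A⁻¹ *ᵥ p)) := by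
  rw [det_fromBlocks_smul_left, det_fromBlocks_replicateCol_replicateRow hA, mulVec_smul,
    dotProduct_smul, smul_dotProduct, smul_eq_mul, smul_eq_mul, mul_assoc, mul_assoc]

theorem nonsing_inv_map (f : R →+* S) {A : Matrix m m R} (hA : IsUnit A.det) :
    (A.map f)⁻¹ = A⁻¹.map f := by
  apply inv_eq_right_inv
  rw [← Matrix.map_mul, mul_nonsing_inv A hA, Matrix.map_one f f.map_zero f.map_one]

theorem map_dotProduct_nonsing_inv_mulVec (f : R →+* S) {A : Matrix m m R}
    (hA : IsUnit A.det) (b p : m → R) :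
    f (b ⬝ᵥ A⁻¹ *ᵥ p) = (f ∘ b) ⬝ᵥ (A.map f)⁻¹ *ᵥ (f ∘ p) := by
  rw [f.map_dotProduct, nonsing_inv_map f hA]
  congr 1
  exact funext (f.map_mulVec _ _)

end BlockDeterminants

/-- The determinant identity at the heart of the Lagrangian angle computation for the
Lagrangian correction `X₂`: with blocks `u^a M`, `a u^(a-1) p`, `-2a u^(2a-1) i b` and
`1 - 2a(2a-1) u^(2a-2) β i`, the determinant equals
`u^(na) det M (1 + u^(2a-2)(2a² bᵀM⁻¹p − 2a(2a−1)β) i)`. -/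
theorem stmt_8 (n a : ℕ) (hn : 1 ≤ n) (ha : 1 ≤ a) (u β : ℝ)
    (M : Matrix (Fin n) (Fin n) ℝ) (hM : M.det ≠ 0) (p b : Fin n → ℝ) :
    (Matrix.fromBlocks
        (Matrix.of fun i k : Fin n => ((u ^ a * M i k : ℝ) : ℂ))
        (Matrix.of fun (i : Fin n) (_ : Unit) => (((a : ℝ) * u ^ (a - 1) * p i : ℝ) : ℂ))
        (Matrix.of fun (_ : Unit) (k : Fin n) =>
          -(((2 * (a : ℝ)) * u ^ (2 * a - 1) * b k : ℝ) : ℂ) * Complex.I)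
        (Matrix.of fun (_ : Unit) (_ : Unit) =>
          1 - (((2 * (a : ℝ) * (2 * (a : ℝ) - 1)) * u ^ (2 * a - 2) * β : ℝ) : ℂ)
            * Complex.I)).det
      = (u : ℂ) ^ (n * a) * ((M.det : ℝ) : ℂ) *
        (1 + (u : ℂ) ^ (2 * a - 2) *
          (((2 * (a : ℝ) ^ 2 * (∑ k, ∑ l, b k * M⁻¹ k l * p l)
              - 2 * (a : ℝ) * (2 * (a : ℝ) - 1) * β : ℝ) : ℂ)) * Complex.I) := by
  set A : Matrix (Fin n) (Fin n) ℂ := M.map Complex.ofRealHom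
  have hA_det : A.det = M.det := (Complex.ofRealHom.map_det M).symm
  have hA : IsUnit A.det := by simpa [hA_det] using hM
  have bilin_eq : ((∑ k, ∑ l, b k * M⁻¹ k l * p l : ℝ) : ℂ) =
      (Complex.ofRealHom ∘ b) ⬝ᵥ A⁻¹ *ᵥ (Complex.ofRealHom ∘ p) := by
    rw [← map_dotProduct_nonsing_inv_mulVec _ hM.isUnit, dot_mulVec_eq_sum_sum,
      Finset.sum_comm, Complex.ofRealHom_eq_coe]
  have hpow_row : 2 * a - 1 = a + (a - 1) := by lia
  have hpow_schur : 2 * a - 2 = (a - 1) + (a - 1) := by lia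
  trans (fromBlocks ((u : ℂ) ^ a • A)
      (replicateCol Unit ((a * (u : ℂ) ^ (a - 1)) • (Complex.ofRealHom ∘ p)))
      ((u : ℂ) ^ a • replicateRow Unit
        ((-(2 * a * (u : ℂ) ^ (a - 1) * Complex.I)) • (Complex.ofRealHom ∘ b)))
      (of fun _ _ => 1 - 2 * a * (2 * a - 1) * (u : ℂ) ^ (2 * a - 2) * β * Complex.I)).det
  · congr 2 <;> ext
    · simp [A]
    · simp
    · simp only [of_apply, Matrix.smul_apply, replicateRow_apply, Pi.smul_apply,
        Function.comp_apply, Complex.ofRealHom_eq_coe, smul_eq_mul, hpow_row, pow_add]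
      push_cast
      ring
    · simp
  · rw [det_fromBlocks_smul_replicateCol_replicateRow hA, ← bilin_eq, hA_det, of_apply,
      Fintype.card_fin, ← pow_mul, mul_comm a n, hpow_schur, pow_add]
    push_cast
    ring
end

section
/- Let E and F be real Banach spaces, let p be a formal multilinear series from E to F with p₀ = 0 and p₁ = 0, let f : E → F, and suppose f has p as a power series on the ball of radius R > 0 centered at 0 (in the sense of HasFPowerSeriesOnBall). Let r > 0 with 2r < R. Then there exists a constant C ≥ 0 such that for all x, y ∈ E with ‖x‖ ≤ r and ‖y‖ ≤ r, ‖f(x) − f(y)‖ ≤ C · (‖x‖ + ‖y‖) · ‖x − y‖. In particular f(0) = 0 and ‖f(x)‖ ≤ C ‖x‖² for ‖x‖ ≤ r. -/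
/-!
For `n ≥ 1`, telescoping one argument at a time gives
`‖pₙ(u, …, u) - pₙ(v, …, v)‖ ≤ n ‖pₙ‖ (max ‖u‖ ‖v‖) ^ (n - 1) ‖u - v‖`. The terms with `n ≥ 2`
each carry a factor `max ‖u‖ ‖v‖`, and strictly inside the ball of convergence the remaining
coefficients sum geometrically, so only the linear term obstructs a quadratic Lipschitz estimate.
-/

section QuadraticLipschitz

open scoped ENNReal
open Metric

variable {𝕜 E F : Type*} [NontriviallyNormedField 𝕜]
  [NormedAddCommGroup E] [NormedSpace 𝕜 E] [NormedAddCommGroup F] [NormedSpace 𝕜 F]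
  {p : FormalMultilinearSeries 𝕜 E F} {f : E → F} {c : E} {R r : ℝ≥0∞}

theorem exists_norm_image_sub_sub_coeff_one_le_on_closedEBall
    (hf : HasFPowerSeriesOnBall f p c R) (hr : r < R) :
    ∃ C : ℝ, 0 ≤ C ∧ ∀ᵉ (x ∈ closedEBall c r) (y ∈ closedEBall c r),
      ‖f x - f y - p 1 fun _ => x - y‖ ≤ C * (‖x - c‖ + ‖y - c‖) * ‖x - y‖ := by
  obtain ⟨s, hrs, hsR⟩ := exists_between hr
  obtain ⟨C, hC⟩ := hf.image_sub_sub_deriv_le hsR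
  have hsub : closedEBall c r ⊆ eball c s := fun x hx => lt_of_le_of_lt hx hrs
  refine ⟨|C|, abs_nonneg C, fun x hx y hy => ?_⟩
  calc ‖f x - f y - p 1 fun _ => x - y‖
      ≤ C * max ‖x - c‖ ‖y - c‖ * ‖x - y‖ := hC x (hsub hx) y (hsub hy)
    _ ≤ |C| * (‖x - c‖ + ‖y - c‖) * ‖x - y‖ := by
      gcongr
      · exact le_abs_self C
      · exact max_le_add_of_nonneg (norm_nonneg _) (norm_nonneg _)

theorem exists_norm_image_sub_le_on_closedEBall_of_coeff_one_eq_zero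
    (hf : HasFPowerSeriesOnBall f p c R) (hp1 : p 1 = 0) (hr : r < R) :
    ∃ C : ℝ, 0 ≤ C ∧ ∀ᵉ (x ∈ closedEBall c r) (y ∈ closedEBall c r),
      ‖f x - f y‖ ≤ C * (‖x - c‖ + ‖y - c‖) * ‖x - y‖ := by
  simpa only [hp1, zero_apply, sub_zero]
    using exists_norm_image_sub_sub_coeff_one_le_on_closedEBall hf hr

theorem image_center_eq_zero_of_coeff_zero_eq_zero
    (hf : HasFPowerSeriesOnBall f p c R) (hp0 : p 0 = 0) : f c = 0 := by
  rw [← hf.coeff_zero 0, hp0, zero_apply]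

theorem stmt_13_general (hp0 : p 0 = 0) (hp1 : p 1 = 0)
    (hf : HasFPowerSeriesOnBall f p c R) (hr : r < R) :
    ∃ C : ℝ, 0 ≤ C ∧
      (∀ᵉ (x ∈ closedEBall c r) (y ∈ closedEBall c r),
        ‖f x - f y‖ ≤ C * (‖x - c‖ + ‖y - c‖) * ‖x - y‖) ∧
      f c = 0 ∧ ∀ x ∈ closedEBall c r, ‖f x‖ ≤ C * ‖x - c‖ ^ 2 := by
  obtain ⟨C, hC, hlip⟩ := exists_norm_image_sub_le_on_closedEBall_of_coeff_one_eq_zero hf hp1 hr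
  have hfc : f c = 0 := image_center_eq_zero_of_coeff_zero_eq_zero hf hp0
  refine ⟨C, hC, hlip, hfc, fun x hx => ?_⟩
  calc ‖f x‖ = ‖f x - f c‖ := by rw [hfc, sub_zero]
    _ ≤ C * (‖x - c‖ + ‖c - c‖) * ‖x - c‖ := hlip x hx c mem_closedEBall_self
    _ = C * ‖x - c‖ ^ 2 := by rw [sub_self, norm_zero]; ring

end QuadraticLipschitz

/-- Quadratic Lipschitz estimate for a sum of a power series with vanishing constant and
linear terms: if `f` has such a power series on a ball of radius `R > 0` and `2r < R`, then
`‖f x − f y‖ ≤ C (‖x‖ + ‖y‖) ‖x − y‖` on the ball of radius `r`; in particular `f 0 = 0` and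
`‖f x‖ ≤ C ‖x‖²` there. -/
theorem stmt_13 {E F : Type*} [NormedAddCommGroup E] [NormedSpace ℝ E]
    [NormedAddCommGroup F] [NormedSpace ℝ F]
    (p : FormalMultilinearSeries ℝ E F) (hp0 : p 0 = 0) (hp1 : p 1 = 0)
    (f : E → F) (R : ENNReal) (hR : 0 < R)
    (hf : HasFPowerSeriesOnBall f p 0 R)
    (r : ℝ) (hr : 0 < r) (h2r : ENNReal.ofReal (2 * r) < R) :
    ∃ C : ℝ, 0 ≤ C ∧
      (∀ x y : E, ‖x‖ ≤ r → ‖y‖ ≤ r → ‖f x - f y‖ ≤ C * (‖x‖ + ‖y‖) * ‖x - y‖) ∧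
      f 0 = 0 ∧ ∀ x : E, ‖x‖ ≤ r → ‖f x‖ ≤ C * ‖x‖ ^ 2 := by
  have hrR : ENNReal.ofReal r < R := (ENNReal.ofReal_le_ofReal (by linarith)).trans_lt h2r
  simpa [Metric.closedEBall_ofReal hr.le, imp_forall_iff] using
    stmt_13_general hp0 hp1 hf hrR
end
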